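/- For every λ-term M, H_r(T_r(M)) = T_r(H(M)), where H_r(T_r(M)) = { H_r(a) | a ∈ T_r(M) and H_r(a) ≠ 0 }; that is, head-reduction commutes with rigid expansion. -/

import Mathlib

/-! Ordinary λ-terms, in de Bruijn notation. -/
inductive Lam : Type
  | var : ℕ → Lam
  | lam : Lam → Lam
  | app : Lam → Lam → Lam
  deriving DecidableEq

namespace Lam

/-- Shift the free indices `≥ d` up by one. -/
def lift (d : ℕ) : Lam → Lam
  | var n => if n < d then var n else var (n + 1)
  | lam M => lam (lift (d + 1) M)
  | app P Q => app (lift d P) (lift d Q)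

/-- Capture-avoiding substitution of `N` for the free variable `k`. -/
def subst : Lam → ℕ → Lam → Lam
  | var n, k, N => if n = k then N else if k < n then var (n - 1) else var n
  | lam M, k, N => lam (subst M (k + 1) (lift 0 N))
  | app P Q, k, N => app (subst P k N) (subst Q k N)

/-- Number of free occurrences of the variable `k`. -/
def count (k : ℕ) : Lam → ℕ
  | var n => if n = k then 1 else 0
  | lam M => count (k + 1) M
  | app P Q => count k P + count k Q

/-- One-step β-reduction. -/
inductive Beta : Lam → Lam → Prop
  | beta (M N : Lam) : Beta (app (lam M) N) (subst M 0 N)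
  | lam {M M'} : Beta M M' → Beta (lam M) (lam M')
  | appL {P P' Q} : Beta P P' → Beta (app P Q) (app P' Q)
  | appR {P Q Q'} : Beta Q Q' → Beta (app P Q) (app P Q')

/-- The head of the application spine is a variable, with no λ on the spine. -/
def neutral : Lam → Bool
  | var _ => true
  | lam _ => false
  | app P _ => neutral P

/-- Head-normal forms: `λx₁…λxₘ. x N₁ … Nₙ`. -/
def isHNF : Lam → Prop
  | var _ => True
  | lam M => isHNF M
  | app P _ => neutral P = true

/-- The head-reduction function `H`: contracts the head redex, identity on head-normal
forms. -/
def H : Lam → Lam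
  | var n => var n
  | lam M => lam (H M)
  | app (lam P) Q => subst P 0 Q
  | app (var n) Q => app (var n) Q
  | app (app P₁ P₂) Q => app (H (app P₁ P₂)) Q

/-- The left-parallel reduction function `L`: identity on β-normal forms, propagated to
the arguments on head-normal forms, contraction of the head redex otherwise. -/
def L : Lam → Lam
  | var n => var n
  | lam M => lam (L M)
  | app (lam P) Q => subst P 0 Q
  | app (var n) Q => app (var n) (L Q)
  | app (app P₁ P₂) Q =>
      if neutral (app P₁ P₂) then app (L (app P₁ P₂)) (L Q)
      else app (L (app P₁ P₂)) Q

/-- Iterated application `M N₁ … Nₙ`. -/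
def mkApps (M : Lam) (Ns : List Lam) : Lam := Ns.foldl app M

/-- All free variables are `< d`. -/
def ClosedAt (d : ℕ) : Lam → Prop
  | var n => n < d
  | lam M => ClosedAt (d + 1) M
  | app P Q => ClosedAt d P ∧ ClosedAt d Q

/-- `M` is head-normalizable: it β-reduces in finitely many steps to a head-normal form. -/
def HeadNormalizable (M : Lam) : Prop :=
  ∃ N, Relation.ReflTransGen Beta M N ∧ isHNF N

/-- `M` is a β-normal form: it contains no β-redex, i.e. admits no β-step. -/
def BetaNF (M : Lam) : Prop := ¬∃ N, Beta M N

/-- `M` is β-normalizable: it β-reduces in finitely many steps to a β-normal form. -/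
def BetaNormalizable (M : Lam) : Prop :=
  ∃ N, Relation.ReflTransGen Beta M N ∧ BetaNF N

/-- `M` is strongly β-normalizable: no infinite β-reduction sequence starts from `M`. -/
def StronglyNormalizable (M : Lam) : Prop := Acc (fun N M' => Beta M' N) M

end Lam

/-! Rigid resource terms (the nonzero ones), in de Bruijn notation:
`a ::= x | λx.a | ⟨c⟩d⃗` with `d⃗` a list of rigid terms.
The term `0` is represented by `none : Option Rig`. -/
inductive Rig : Type
  | var : ℕ → Rig
  | lam : Rig → Rig
  | app : Rig → List Rig → Rig

namespace Rig

mutual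
/-- Number of free occurrences of the variable `k` in a rigid term. -/
def countR (k : ℕ) : Rig → ℕ
  | var n => if n = k then 1 else 0
  | lam a => countR (k + 1) a
  | app c ds => countR k c + countRList k ds
termination_by a => sizeOf a

def countRList (k : ℕ) : List Rig → ℕ
  | [] => 0
  | d :: ds => countR k d + countRList k ds
termination_by ds => sizeOf ds
end

mutual
/-- Shift the free indices `≥ d` up by one. -/
def liftR (d : ℕ) : Rig → Rig
  | var n => if n < d then var n else var (n + 1)
  | lam a => lam (liftR (d + 1) a)
  | app c ds => app (liftR d c) (liftRList d ds)
termination_by a => sizeOf a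

def liftRList (d : ℕ) : List Rig → List Rig
  | [] => []
  | a :: as => liftR d a :: liftRList d as
termination_by as => sizeOf as
end

mutual
/-- Rigid substitution `a[b⃗/k]`: the list `b⃗` is distributed, in order, over the
free occurrences of the variable `k`; the result is `none` (i.e. `0`) when
`|b⃗| ≠ n_k(a)`. -/
def rsubst (k : ℕ) : Rig → List Rig → Option Rig
  | var n, bs =>
      if n = k then (match bs with | [b] => some b | _ => none)
      else (match bs with
            | [] => some (if k < n then var (n - 1) else var n)
            | _ => none)
  | lam a, bs => (rsubst (k + 1) a (liftRList 0 bs)).map lam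
  | app c ds, bs =>
      match rsubst k c (bs.take (countR k c)), rsubstList k ds (bs.drop (countR k c)) with
      | some c', some ds' => some (app c' ds')
      | _, _ => none
termination_by a _ => sizeOf a

def rsubstList (k : ℕ) : List Rig → List Rig → Option (List Rig)
  | [], bs => if bs.isEmpty then some [] else none
  | d :: ds, bs =>
      match rsubst k d (bs.take (countR k d)), rsubstList k ds (bs.drop (countR k d)) with
      | some d', some ds' => some (d' :: ds')
      | _, _ => none
termination_by ds _ => sizeOf ds
end

/-- One-step rigid resource reduction `→_r` (contextual closure of
`⟨λx.a⟩b⃗ →_r a[b⃗/x]`); the result may be `0` (i.e. `none`), which annihilates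
the surrounding context. -/
inductive RStep : Rig → Option Rig → Prop
  | beta (a : Rig) (bs : List Rig) : RStep (app (lam a) bs) (rsubst 0 a bs)
  | lam {a r} : RStep a r → RStep (lam a) (r.map lam)
  | head {c r} (ds : List Rig) : RStep c r → RStep (app c ds) (r.map (fun c' => app c' ds))
  | arg {d r} (c : Rig) (ds₁ ds₂ : List Rig) :
      RStep d r → RStep (app c (ds₁ ++ d :: ds₂)) (r.map (fun d' => app c (ds₁ ++ d' :: ds₂)))

/-- `→_r` on rigid terms extended with `0`; `0` is inert. -/
inductive RStepO : Option Rig → Option Rig → Prop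
  | mk {a r} : RStep a r → RStepO (some a) r

/-- `r` is a `→_r`-normal form (`0` is one). -/
def RNormal (r : Option Rig) : Prop := ¬∃ r', RStepO r r'

/-- The head of the application spine is a variable, with no λ on the spine. -/
def rNeutral : Rig → Bool
  | var _ => true
  | lam _ => false
  | app c _ => rNeutral c

/-- Rigid head-normal forms among nonzero terms: `λx₁…λxₘ.⟨…⟨x⟩d⃗₁…⟩d⃗ₙ`
(the term `0` is a head-normal form, but it is treated separately). -/
def rIsHNF : Rig → Prop
  | var _ => True
  | lam a => rIsHNF a
  | app c _ => rNeutral c = true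

/-- The rigid head-reduction function `H_r`: contracts the head redex, identity on
head-normal forms; the result may be `0` (i.e. `none`). -/
def Hr : Rig → Option Rig
  | var n => some (var n)
  | lam a => (Hr a).map lam
  | app (lam a) bs => rsubst 0 a bs
  | app (var n) ds => some (app (var n) ds)
  | app (app c₁ c₂) ds => (Hr (app c₁ c₂)).map (fun c' => app c' ds)

/-- `H_r` extended to terms-or-`0`. -/
def HrO : Option Rig → Option Rig := fun r => r.bind Hr

mutual
/-- The rigid left-parallel reduction function `L_r`: identity on `→_r`-normal forms,
applied componentwise to the argument lists on head-normal forms, contraction of the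
head redex otherwise; the result may be `0` (i.e. `none`). -/
def Lr : Rig → Option Rig
  | var n => some (var n)
  | lam a => (Lr a).map lam
  | app (lam a) bs => rsubst 0 a bs
  | app (var n) ds => (LrList ds).map (fun ds' => app (var n) ds')
  | app (app c₁ c₂) ds =>
      if rNeutral (app c₁ c₂) then
        match Lr (app c₁ c₂), LrList ds with
        | some c', some ds' => some (app c' ds')
        | _, _ => none
      else (Lr (app c₁ c₂)).map (fun c' => app c' ds)
termination_by a => sizeOf a

def LrList : List Rig → Option (List Rig)
  | [] => some []
  | d :: ds =>
      match Lr d, LrList ds with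
      | some d', some ds' => some (d' :: ds')
      | _, _ => none
termination_by ds => sizeOf ds
end

/-- `L_r` extended to terms-or-`0`. -/
def LrO : Option Rig → Option Rig := fun r => r.bind Lr

/-- Positive resource terms: no empty list/multiset occurs as the argument of an
application. -/
inductive rPositive : Rig → Prop
  | var (n : ℕ) : rPositive (var n)
  | lam {a} : rPositive a → rPositive (lam a)
  | app {c : Rig} {ds : List Rig} :
      rPositive c → ds ≠ [] → (∀ d ∈ ds, rPositive d) → rPositive (app c ds)

end Rig

/-- The rigid expansion `T_r(M)` of a λ-term (equivalently, the support of its Taylor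
expansion, with multisets presented by lists: `Texp M` is closed under permutation of
argument lists). -/
def Texp : Lam → Set Rig
  | Lam.var n => {Rig.var n}
  | Lam.lam M => {a | ∃ b ∈ Texp M, a = Rig.lam b}
  | Lam.app P Q => {a | ∃ c ∈ Texp P, ∃ ds : List Rig, (∀ d ∈ ds, d ∈ Texp Q) ∧ a = Rig.app c ds}

namespace Rig

/-- The support of the `n`-linear substitution `∂_k a · b̄`, where the multiset `b̄` is
presented by the list `bs`: the finite formal sum (multiset) of all nonzero results of
rigid substitutions along bijective assignments, i.e. permutations of `bs`. -/
def permSubst (k : ℕ) (a : Rig) (bs : List Rig) : Multiset Rig :=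
  ↑(bs.permutations.filterMap (fun bs' => rsubst k a bs'))

/-- One step of non-erasing ε-resource reduction `→^{¬e}_{∂ε}` out of a single resource
term, producing a finite formal sum (a multiset) of resource terms: non-erasing resource
β-steps `⟨λx.a⟩b̄ → ∂_x a · b̄` (with `x ∈ FV(a)`) and resource σ₁-steps, under any
context. -/
inductive NEStep : Rig → Multiset Rig → Prop
  | beta {a : Rig} (bs : List Rig) :
      0 < countR 0 a → NEStep (app (lam a) bs) (permSubst 0 a bs)
  | sigma (a : Rig) (ts qs : List Rig) :
      NEStep (app (app (lam a) ts) qs) {app (lam (app a (liftRList 0 qs))) ts}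
  | lam {a σ} : NEStep a σ → NEStep (lam a) (σ.map lam)
  | head {c σ} (ds : List Rig) : NEStep c σ → NEStep (app c ds) (σ.map (fun c' => app c' ds))
  | arg {d σ} (c : Rig) (ds₁ ds₂ : List Rig) :
      NEStep d σ → NEStep (app c (ds₁ ++ d :: ds₂)) (σ.map (fun d' => app c (ds₁ ++ d' :: ds₂)))

/-- Non-erasing ε-resource reduction on finite formal sums, extended by linearity. -/
def NEStepSum (σ τ : Multiset Rig) : Prop :=
  ∃ (a : Rig) (ρ υ : Multiset Rig), σ = a ::ₘ ρ ∧ NEStep a υ ∧ τ = υ + ρ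

/-- `σ` is a `→^{¬e}_{∂ε}`-normal form. -/
def NENormal (σ : Multiset Rig) : Prop := ¬∃ τ, NEStepSum σ τ

end Rig

/-- One step of non-erasing ε-reduction on λ-terms: non-erasing β-steps
`(λx.M)N → M[N/x]` (with `x ∈ FV(M)`) together with σ₁-steps
`((λx.M)N)P → (λx.MP)N` (`x ∉ FV(P)`), under any context. -/
inductive NEeps : Lam → Lam → Prop
  | beta {M : Lam} (N : Lam) :
      0 < Lam.count 0 M → NEeps (Lam.app (Lam.lam M) N) (Lam.subst M 0 N)
  | sigma (M N P : Lam) :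
      NEeps (Lam.app (Lam.app (Lam.lam M) N) P)
        (Lam.app (Lam.lam (Lam.app M (Lam.lift 0 P))) N)
  | lam {M M'} : NEeps M M' → NEeps (Lam.lam M) (Lam.lam M')
  | appL {P P' Q} : NEeps P P' → NEeps (Lam.app P Q) (Lam.app P' Q)
  | appR {P Q Q'} : NEeps Q Q' → NEeps (Lam.app P Q) (Lam.app P Q')

/-- The set `S` of λ-terms. -/
inductive SLam : Lam → Prop
  | varApp (n : ℕ) (Ms : List Lam) :
      (∀ M ∈ Ms, SLam M) → SLam (Lam.mkApps (Lam.var n) Ms)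
  | lam {M} : SLam M → SLam (Lam.lam M)
  | redex (M₀ M₁ : Lam) (Ms : List Lam) :
      SLam M₁ → SLam (Lam.mkApps (Lam.subst M₀ 0 M₁) Ms) →
      SLam (Lam.mkApps (Lam.app (Lam.lam M₀) M₁) Ms)

/-- λI-terms: every abstraction binds a variable occurring free in its body. -/
def LamI : Lam → Prop
  | Lam.var _ => True
  | Lam.lam M => LamI M ∧ 0 < Lam.count 0 M
  | Lam.app P Q => LamI P ∧ LamI Q

namespace HeadComm
open Rig

theorem liftRList_eq (d : ℕ) (as : List Rig) : liftRList d as = as.map (liftR d) := by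
  induction as with
  | nil => simp [liftRList]
  | cons a as ih => simp [liftRList, ih]

/-- Lists over an image are images of lists. -/
theorem list_lift {f : Rig → Rig} {S : Set Rig} (l : List Rig)
    (h : ∀ x ∈ l, ∃ y ∈ S, f y = x) : ∃ l' : List Rig, (∀ y ∈ l', y ∈ S) ∧ l'.map f = l := by
  induction l with
  | nil => exact ⟨[], by simp, rfl⟩
  | cons x l ih =>
    obtain ⟨y, hy, rfl⟩ := h x (by simp)
    obtain ⟨l', h1, rfl⟩ := ih (fun z hz => h z (by simp [hz]))
    refine ⟨y :: l', ?_, rfl⟩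
    intro z hz
    rcases List.mem_cons.1 hz with rfl | hz
    · exact hy
    · exact h1 z hz

theorem mem_Texp_lift (N : Lam) : ∀ (d : ℕ) (b : Rig),
    b ∈ Texp (Lam.lift d N) ↔ ∃ a ∈ Texp N, liftR d a = b := by
  induction N with
  | var n =>
    intro d b
    by_cases h : n < d <;> simp [Lam.lift, Texp, liftR, h, eq_comm]
  | lam M ih =>
    intro d b
    simp only [Lam.lift, Texp, Set.mem_ofPred_eq]
    constructor
    · rintro ⟨c, hc, rfl⟩
      obtain ⟨a, ha, rfl⟩ := (ih _ _).1 hc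
      exact ⟨_, ⟨a, ha, rfl⟩, by simp [liftR]⟩
    · rintro ⟨_, ⟨a, ha, rfl⟩, rfl⟩
      exact ⟨_, (ih _ _).2 ⟨a, ha, rfl⟩, by simp [liftR]⟩
  | app P Q ihP ihQ =>
    intro d b
    simp only [Lam.lift, Texp, Set.mem_ofPred_eq]
    constructor
    · rintro ⟨c, hc, ds, hds, rfl⟩
      obtain ⟨a, ha, rfl⟩ := (ihP _ _).1 hc
      obtain ⟨l, hl, rfl⟩ := list_lift ds (fun x hx => (ihQ _ _).1 (hds x hx))
      exact ⟨_, ⟨a, ha, l, hl, rfl⟩, by simp [liftR, liftRList_eq]⟩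
    · rintro ⟨_, ⟨a, ha, l, hl, rfl⟩, rfl⟩
      refine ⟨_, (ihP _ _).2 ⟨a, ha, rfl⟩, l.map (liftR d), ?_, by simp [liftR, liftRList_eq]⟩
      intro x hx
      obtain ⟨y, hy, rfl⟩ := List.mem_map.1 hx
      exact (ihQ _ _).2 ⟨y, hl y hy, rfl⟩

theorem rsubst_app {k : ℕ} {c : Rig} {ds bs : List Rig} {b : Rig} :
    rsubst k (app c ds) bs = some b ↔ ∃ c' ds', rsubst k c (bs.take (countR k c)) = some c' ∧
      rsubstList k ds (bs.drop (countR k c)) = some ds' ∧ b = app c' ds' := by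
  rw [rsubst]
  split
  · next h1 h2 => simp [h1, h2, eq_comm]
  · next h =>
    simp only [reduceCtorEq, false_iff]
    rintro ⟨c', ds', h1, h2, -⟩
    exact h _ _ h1 h2

theorem rsubstList_cons {k : ℕ} {c : Rig} {ds bs bs' : List Rig} :
    rsubstList k (c :: ds) bs = some bs' ↔
      ∃ c' ds', rsubst k c (bs.take (countR k c)) = some c' ∧
      rsubstList k ds (bs.drop (countR k c)) = some ds' ∧ bs' = c' :: ds' := by
  rw [rsubstList]
  split
  · next h1 h2 => simp [h1, h2, eq_comm]
  · next h =>
    simp only [reduceCtorEq, false_iff]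
    rintro ⟨c', ds', h1, h2, -⟩
    exact h _ _ h1 h2

theorem rsubst_var {k n : ℕ} {bs : List Rig} {b : Rig} :
    rsubst k (var n) bs = some b ↔
      (n = k ∧ bs = [b]) ∨ (n ≠ k ∧ bs = [] ∧ b = if k < n then var (n - 1) else var n) := by
  by_cases h : n = k
  · rcases bs with _ | ⟨x, _ | ⟨y, l⟩⟩ <;> simp [rsubst, h]
  · rcases bs with _ | ⟨x, _ | ⟨y, l⟩⟩ <;> simp [rsubst, h, eq_comm]

mutual
theorem rsubst_length (k : ℕ) : ∀ (a : Rig) (bs : List Rig) (b : Rig),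
    rsubst k a bs = some b → bs.length = countR k a
  | var n, bs, b, h => by
    rcases rsubst_var.1 h with ⟨e, rfl⟩ | ⟨e, rfl, -⟩ <;> simp [countR, e]
  | lam a, bs, b, h => by
    rw [rsubst, Option.map_eq_some_iff] at h
    obtain ⟨c, hc, -⟩ := h
    have := rsubst_length (k + 1) a _ _ hc
    simpa [countR, liftRList_eq] using this
  | app c ds, bs, b, h => by
    obtain ⟨c', ds', h1, h2, -⟩ := rsubst_app.1 h
    have e1 := rsubst_length k c _ _ h1
    have e2 := rsubstList_length k ds _ _ h2
    simp only [List.length_take, List.length_drop] at e1 e2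
    rw [countR]
    omega
termination_by a _ _ _ => sizeOf a

theorem rsubstList_length (k : ℕ) : ∀ (as : List Rig) (bs : List Rig) (b : List Rig),
    rsubstList k as bs = some b → bs.length = countRList k as
  | [], bs, b, h => by
    rw [rsubstList] at h
    rcases bs with _ | ⟨x, l⟩ <;> simp_all [countRList]
  | c :: ds, bs, b, h => by
    obtain ⟨c', ds', h1, h2, -⟩ := rsubstList_cons.1 h
    have e1 := rsubst_length k c _ _ h1
    have e2 := rsubstList_length k ds _ _ h2
    simp only [List.length_take, List.length_drop] at e1 e2
    rw [countRList]
    omega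
termination_by as _ _ _ => sizeOf as
end

theorem mem_Texp_subst (M : Lam) : ∀ (k : ℕ) (N : Lam) (b : Rig),
    b ∈ Texp (Lam.subst M k N) ↔
      ∃ a ∈ Texp M, ∃ bs : List Rig, (∀ x ∈ bs, x ∈ Texp N) ∧ rsubst k a bs = some b := by
  induction M with
  | var n =>
    intro k N b
    simp only [Texp, Set.mem_singleton_iff, exists_eq_left, rsubst_var, Lam.subst]
    by_cases h : n = k
    · simp [h]
    · by_cases h' : k < n <;> simp [h, h', Texp]
  | lam M ih =>
    intro k N b
    simp only [Lam.subst, Texp, Set.mem_ofPred_eq]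
    constructor
    · rintro ⟨c, hc, rfl⟩
      obtain ⟨a, ha, bs, hbs, h⟩ := (ih _ _ _).1 hc
      obtain ⟨l, hl, rfl⟩ := list_lift bs (fun x hx => (mem_Texp_lift _ _ _).1 (hbs x hx))
      exact ⟨_, ⟨a, ha, rfl⟩, l, hl, by simp [rsubst, liftRList_eq, h]⟩
    · rintro ⟨_, ⟨a, ha, rfl⟩, l, hl, h⟩
      rw [rsubst, Option.map_eq_some_iff] at h
      obtain ⟨c, hc, rfl⟩ := h
      refine ⟨c, (ih _ _ _).2 ⟨a, ha, _, ?_, hc⟩, rfl⟩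
      intro x hx
      rw [liftRList_eq] at hx
      obtain ⟨y, hy, rfl⟩ := List.mem_map.1 hx
      exact (mem_Texp_lift _ _ _).2 ⟨y, hl y hy, rfl⟩
  | app P Q ihP ihQ =>
    intro k N b
    have hlist : ∀ ds' : List Rig, (∀ d ∈ ds', d ∈ Texp (Lam.subst Q k N)) ↔
        ∃ ds : List Rig, (∀ d ∈ ds, d ∈ Texp Q) ∧ ∃ bs : List Rig,
          (∀ x ∈ bs, x ∈ Texp N) ∧ rsubstList k ds bs = some ds' := by
      intro ds'
      constructor
      · induction ds' with
        | nil => intro _; exact ⟨[], by simp, [], by simp, by simp [rsubstList]⟩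
        | cons d ds' ih =>
          intro h
          obtain ⟨ds, hds, bs, hbs, e⟩ := ih (fun x hx => h x (by simp [hx]))
          obtain ⟨a, ha, cs, hcs, e'⟩ := (ihQ _ _ _).1 (h d (by simp))
          have hlen := rsubst_length _ _ _ _ e'
          refine ⟨a :: ds, ?_, cs ++ bs, ?_, ?_⟩
          · simpa using ⟨ha, hds⟩
          · intro x hx
            rcases List.mem_append.1 hx with hx | hx
            · exact hcs x hx
            · exact hbs x hx
          · rw [rsubstList_cons]
            exact ⟨d, ds', by simp [← hlen, e'], by simp [← hlen, e], rfl⟩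
      · rintro ⟨ds, hds, bs, hbs, e⟩
        induction ds generalizing bs ds' with
        | nil =>
          rw [rsubstList] at e
          rcases bs with _ | ⟨x, l⟩ <;> simp_all
        | cons a ds ih =>
          obtain ⟨d, ds', h1, h2, rfl⟩ := rsubstList_cons.1 e
          intro x hx
          rcases List.mem_cons.1 hx with rfl | hx
          · exact (ihQ _ _ _).2 ⟨a, hds a (by simp), _,
              fun y hy => hbs y (List.mem_of_mem_take hy), h1⟩
          · exact ih ds' (fun y hy => hds y (by simp [hy])) _
              (fun y hy => hbs y (List.mem_of_mem_drop hy)) h2 x hx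
    simp only [Lam.subst, Texp, Set.mem_ofPred_eq]
    constructor
    · rintro ⟨c, hc, ds', hds', rfl⟩
      obtain ⟨ds, hds, bs, hbs, e⟩ := (hlist _).1 hds'
      obtain ⟨a, ha, cs, hcs, e'⟩ := (ihP _ _ _).1 hc
      have hlen := rsubst_length _ _ _ _ e'
      refine ⟨_, ⟨a, ha, ds, hds, rfl⟩, cs ++ bs, ?_, ?_⟩
      · intro x hx
        rcases List.mem_append.1 hx with hx | hx
        · exact hcs x hx
        · exact hbs x hx
      · rw [rsubst_app]
        exact ⟨c, ds', by simp [← hlen, e'], by simp [← hlen, e], rfl⟩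
    · rintro ⟨_, ⟨a, ha, ds, hds, rfl⟩, bs, hbs, e⟩
      obtain ⟨c, ds', h1, h2, rfl⟩ := rsubst_app.1 e
      exact ⟨c, (ihP _ _ _).2 ⟨a, ha, _, fun y hy => hbs y (List.mem_of_mem_take hy), h1⟩, ds',
        (hlist _).2 ⟨ds, hds, _, fun y hy => hbs y (List.mem_of_mem_drop hy), h2⟩, rfl⟩

theorem main (M : Lam) : ∀ b : Rig,
    (∃ a ∈ Texp M, Rig.Hr a = some b) ↔ b ∈ Texp (Lam.H M) := by
  induction M with
  | var n => intro b; simp [Texp, Lam.H, Hr, eq_comm]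
  | lam M ih =>
    intro b
    simp only [Lam.H, Texp, Set.mem_ofPred_eq]
    constructor
    · rintro ⟨_, ⟨a, ha, rfl⟩, h⟩
      rw [Hr, Option.map_eq_some_iff] at h
      obtain ⟨c, hc, rfl⟩ := h
      exact ⟨c, (ih c).1 ⟨a, ha, hc⟩, rfl⟩
    · rintro ⟨c, hc, rfl⟩
      obtain ⟨a, ha, h⟩ := (ih c).2 hc
      exact ⟨_, ⟨a, ha, rfl⟩, by simp [Hr, h]⟩
  | app P Q ihP _ =>
    intro b
    cases P with
    | var n =>
      simp only [Lam.H, Texp, Set.mem_ofPred_eq, Set.mem_singleton_iff, exists_eq_left]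
      constructor
      · rintro ⟨_, ⟨ds, hds, rfl⟩, h⟩
        rw [Hr, Option.some_inj] at h
        exact ⟨ds, hds, h.symm⟩
      · rintro ⟨ds, hds, rfl⟩
        exact ⟨_, ⟨ds, hds, rfl⟩, by rw [Hr]⟩
    | lam P =>
      rw [Lam.H, mem_Texp_subst]
      simp only [Texp, Set.mem_ofPred_eq]
      constructor
      · rintro ⟨_, ⟨_, ⟨a, ha, rfl⟩, ds, hds, rfl⟩, h⟩
        rw [Hr] at h
        exact ⟨a, ha, ds, hds, h⟩
      · rintro ⟨a, ha, ds, hds, h⟩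
        exact ⟨_, ⟨_, ⟨a, ha, rfl⟩, ds, hds, rfl⟩, by rw [Hr]; exact h⟩
    | app P₁ P₂ =>
      rw [Lam.H]
      constructor
      · rintro ⟨_, ⟨c, hc, ds, hds, rfl⟩, h⟩
        obtain ⟨c₁, hc₁, es, hes, rfl⟩ := id hc
        rw [Hr, Option.map_eq_some_iff] at h
        obtain ⟨c', hc', rfl⟩ := h
        exact ⟨c', (ihP c').1 ⟨_, hc, hc'⟩, ds, hds, rfl⟩
      · rintro ⟨c', hc', ds, hds, rfl⟩
        obtain ⟨c, hc, h⟩ := (ihP c').2 hc'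
        obtain ⟨c₁, hc₁, es, hes, rfl⟩ := id hc
        exact ⟨_, ⟨_, hc, ds, hds, rfl⟩, by rw [Hr, h]; rfl⟩

end HeadComm

/-- `H_r(T_r(M)) = T_r(H(M))`, where
`H_r(T_r(M)) = { H_r(a) | a ∈ T_r(M), H_r(a) ≠ 0 }`: head reduction commutes with
rigid expansion. -/
theorem head_reduction_commutes_with_Texp (M : Lam) :
    {b : Rig | ∃ a ∈ Texp M, Rig.Hr a = some b} = Texp (Lam.H M) := by
  ext b
  exact HeadComm.main M b
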